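/- The logic L = S4.1 ∗ S4 + ◇₁□₂(◇₁p → □₁p) is decidable: membership of a bimodal formula in L is a decidable predicate (the set of formulas belonging to L is computable). -/

import Mathlib

/- ============== Formulas ============== -/

/-- Unimodal formulas. -/
inductive MForm : Type
  | var : ℕ → MForm
  | bot : MForm
  | imp : MForm → MForm → MForm
  | box : MForm → MForm

namespace MForm
def neg (A : MForm) : MForm := A.imp .bot
def dia (A : MForm) : MForm := (MForm.box A.neg).neg
def subst (σ : ℕ → MForm) : MForm → MForm
  | var n => σ n
  | bot => bot
  | imp A B => (subst σ A).imp (subst σ B)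
  | box A => MForm.box (subst σ A)
end MForm

/-- Bimodal formulas (`box 0` is □₁ and `box 1` is □₂). -/
inductive BForm : Type
  | var : ℕ → BForm
  | bot : BForm
  | imp : BForm → BForm → BForm
  | box : Fin 2 → BForm → BForm

namespace BForm
def neg (A : BForm) : BForm := A.imp .bot
def dia (i : Fin 2) (A : BForm) : BForm := (BForm.box i A.neg).neg
def subst (σ : ℕ → BForm) : BForm → BForm
  | var n => σ n
  | bot => bot
  | imp A B => (subst σ A).imp (subst σ B)
  | box i A => BForm.box i (subst σ A)
end BForm

/-- Translation of a unimodal formula into the bimodal language,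
reading □ as □ᵢ. -/
def MForm.toB (i : Fin 2) : MForm → BForm
  | .var n => .var n
  | .bot => .bot
  | .imp A B => (MForm.toB i A).imp (MForm.toB i B)
  | .box A => BForm.box i (MForm.toB i A)

/- ============== Normal modal logics ============== -/

/-- Provability in the smallest normal unimodal logic containing the axioms `Ax`:
classical tautologies (via a Hilbert axiomatization), the normality axiom,
modus ponens, necessitation and uniform substitution. -/
inductive MProv (Ax : Set MForm) : MForm → Prop
  | axm {A : MForm} : A ∈ Ax → MProv Ax A
  | pl1 {A B : MForm} : MProv Ax (A.imp (B.imp A))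
  | pl2 {A B C : MForm} : MProv Ax ((A.imp (B.imp C)).imp ((A.imp B).imp (A.imp C)))
  | pl3 {A : MForm} : MProv Ax ((A.neg.neg).imp A)
  | kax {A B : MForm} : MProv Ax ((MForm.box (A.imp B)).imp ((MForm.box A).imp (MForm.box B)))
  | mp {A B : MForm} : MProv Ax (A.imp B) → MProv Ax A → MProv Ax B
  | nec {A : MForm} : MProv Ax A → MProv Ax (MForm.box A)
  | subst {A : MForm} (σ : ℕ → MForm) : MProv Ax A → MProv Ax (A.subst σ)

/-- Provability in the smallest normal bimodal logic containing the axioms `Ax`. -/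
inductive BProv (Ax : Set BForm) : BForm → Prop
  | axm {A : BForm} : A ∈ Ax → BProv Ax A
  | pl1 {A B : BForm} : BProv Ax (A.imp (B.imp A))
  | pl2 {A B C : BForm} : BProv Ax ((A.imp (B.imp C)).imp ((A.imp B).imp (A.imp C)))
  | pl3 {A : BForm} : BProv Ax ((A.neg.neg).imp A)
  | kax (i : Fin 2) {A B : BForm} :
      BProv Ax ((BForm.box i (A.imp B)).imp ((BForm.box i A).imp (BForm.box i B)))
  | mp {A B : BForm} : BProv Ax (A.imp B) → BProv Ax A → BProv Ax B
  | nec (i : Fin 2) {A : BForm} : BProv Ax A → BProv Ax (BForm.box i A)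
  | subst {A : BForm} (σ : ℕ → BForm) : BProv Ax A → BProv Ax (A.subst σ)

/-- The propositional letter p. -/
def pM : MForm := .var 0

/-- Axioms of S4 : □p→p and □p→□□p. -/
def S4Ax : Set MForm := {(MForm.box pM).imp pM, (MForm.box pM).imp (MForm.box (MForm.box pM))}

/-- The McKinsey axiom □◇p→◇□p. -/
def McKM : MForm := (MForm.box pM.dia).imp (MForm.box pM).dia

/-- The logic S4. -/
def S4L : Set MForm := {A | MProv S4Ax A}

/-- The logic S4.1 = S4 + McKinsey. -/
def S41L : Set MForm := {A | MProv (S4Ax ∪ {McKM}) A}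

/-- Axioms of the fusion S4.1 ∗ S4 : all theorems of S4.1 read with □₁ together
with all theorems of S4 read with □₂. -/
def FusionAx : Set BForm := (MForm.toB 0 '' S41L) ∪ (MForm.toB 1 '' S4L)

/-- The fusion S4.1 ∗ S4 (as a normal bimodal logic). -/
def FusionL : Set BForm := {A | BProv FusionAx A}

def pB : BForm := .var 0

/-- The formula ◇₁□₂(◇₁p → □₁p). -/
def MKB : BForm := BForm.dia 0 (BForm.box 1 ((BForm.dia 0 pB).imp (BForm.box 0 pB)))

/-- The logic L = S4.1 ∗ S4 + ◇₁□₂(◇₁p → □₁p). -/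
def LL : Set BForm := {A | BProv (FusionAx ∪ {MKB}) A}

/- ============== Kripke semantics ============== -/

/-- Truth of a bimodal formula at a point of a Kripke 2-frame `(W, R 0, R 1)`
under valuation `V`. -/
def BSat {W : Type} (R : Fin 2 → W → W → Prop) (V : ℕ → W → Prop) : W → BForm → Prop
  | x, .var n => V n x
  | _, .bot => False
  | x, .imp A B => BSat R V x A → BSat R V x B
  | x, .box i A => ∀ y, R i x y → BSat R V y A

/-- Frame validity for bimodal formulas. -/
def BValid {W : Type} (R : Fin 2 → W → W → Prop) (A : BForm) : Prop :=
  ∀ (V : ℕ → W → Prop) (x : W), BSat R V x A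

/-- Truth of a unimodal formula at a point of a Kripke frame. -/
def MKSat {W : Type} (R : W → W → Prop) (V : ℕ → W → Prop) : W → MForm → Prop
  | x, .var n => V n x
  | _, .bot => False
  | x, .imp A B => MKSat R V x A → MKSat R V x B
  | x, .box A => ∀ y, R x y → MKSat R V y A

/-- Frame validity for unimodal formulas. -/
def MKValid {W : Type} (R : W → W → Prop) (A : MForm) : Prop :=
  ∀ (V : ℕ → W → Prop) (x : W), MKSat R V x A

/- ============== Topological semantics ============== -/

/-- Topological truth of a unimodal formula: □A holds at `x` iff some open
neighbourhood of `x` satisfies `A` everywhere. -/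
def MTSat {X : Type} (t : TopologicalSpace X) (V : ℕ → X → Prop) : X → MForm → Prop
  | x, .var n => V n x
  | _, .bot => False
  | x, .imp A B => MTSat t V x A → MTSat t V x B
  | x, .box A => ∃ U : Set X, t.IsOpen U ∧ x ∈ U ∧ ∀ y ∈ U, MTSat t V y A

/-- Topological validity for unimodal formulas. -/
def MTValid {X : Type} (t : TopologicalSpace X) (A : MForm) : Prop :=
  ∀ (V : ℕ → X → Prop) (x : X), MTSat t V x A

/-- Bitopological truth of a bimodal formula: □ᵢ is interpreted via the
topology `t i`. -/
def BTSat {X : Type} (t : Fin 2 → TopologicalSpace X) (V : ℕ → X → Prop) : X → BForm → Prop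
  | x, .var n => V n x
  | _, .bot => False
  | x, .imp A B => BTSat t V x A → BTSat t V x B
  | x, .box i A => ∃ U : Set X, (t i).IsOpen U ∧ x ∈ U ∧ ∀ y ∈ U, BTSat t V y A

/-- Bitopological validity for bimodal formulas. -/
def BTValid {X : Type} (t : Fin 2 → TopologicalSpace X) (A : BForm) : Prop :=
  ∀ (V : ℕ → X → Prop) (x : X), BTSat t V x A

/-- The horizontal topology on `X × Y`: generated by the base
`{U × {y} : U open in X, y ∈ Y}`. -/
def horiz {X Y : Type} (t : TopologicalSpace X) : TopologicalSpace (X × Y) :=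
  TopologicalSpace.generateFrom
    {S | ∃ (U : Set X) (y : Y), t.IsOpen U ∧ S = U ×ˢ ({y} : Set Y)}

/-- The vertical topology on `X × Y`: generated by the base
`{{x} × U : x ∈ X, U open in Y}`. -/
def vert {X Y : Type} (t : TopologicalSpace Y) : TopologicalSpace (X × Y) :=
  TopologicalSpace.generateFrom
    {S | ∃ (x : X) (U : Set Y), t.IsOpen U ∧ S = ({x} : Set X) ×ˢ U}

/-- The topological product `L₁ ×ₜ L₂` of two unimodal logics: the set of all
bimodal formulas valid in every bitopological product `𝔛₁ × 𝔛₂` of (nonempty)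
topological spaces with `𝔛₁ ⊨ L₁` and `𝔛₂ ⊨ L₂`. -/
def TopProdLogic (L1 L2 : Set MForm) : Set BForm :=
  {A | ∀ (X Y : Type) (t1 : TopologicalSpace X) (t2 : TopologicalSpace Y),
      Nonempty X → Nonempty Y →
      (∀ B ∈ L1, MTValid t1 B) → (∀ B ∈ L2, MTValid t2 B) →
      BTValid ![horiz t1, vert t2] A}

/-- The Alexandrov topology of a (reflexive transitive) relation `R`:
the topology with base `{R(x) : x ∈ W}`. -/
def alexandrov {W : Type} (R : W → W → Prop) : TopologicalSpace W :=
  TopologicalSpace.generateFrom {S | ∃ x, S = {t | R x t}}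

/-- A space is weakly scattered if every nonempty open set contains an
isolated point. -/
def WeaklyScattered {X : Type} (t : TopologicalSpace X) : Prop :=
  ∀ U : Set X, t.IsOpen U → U.Nonempty → ∃ x ∈ U, t.IsOpen ({x} : Set X)

/-- p-morphism between Kripke 1-frames. -/
def IsPMorphism {W U : Type} (R : W → W → Prop) (S : U → U → Prop) (f : W → U) : Prop :=
  Function.Surjective f ∧ (∀ x y, R x y → S (f x) (f y)) ∧
    (∀ x u, S (f x) u → ∃ y, R x y ∧ f y = u)

/-- p-morphism between Kripke 2-frames. -/
def IsPMorphism2 {W U : Type} (R1 R2 : W → W → Prop) (S1 S2 : U → U → Prop)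
    (f : W → U) : Prop :=
  Function.Surjective f ∧
    (∀ x y, R1 x y → S1 (f x) (f y)) ∧ (∀ x u, S1 (f x) u → ∃ y, R1 x y ∧ f y = u) ∧
    (∀ x y, R2 x y → S2 (f x) (f y)) ∧ (∀ x u, S2 (f x) u → ∃ y, R2 x y ∧ f y = u)

/- ============== The frames 𝕋₂,₂ and 𝕋₂,₂₊₂ ============== -/

/-- The four-letter alphabet {a₁,a₂,b₁,b₂}: `(false, i)` is the a-letter `aᵢ₊₁`
and `(true, i)` is the b-letter `bᵢ₊₁`. -/
abbrev Letter : Type := Bool × Fin 2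

/-- `T₂,₂ = {a₁,a₂,b₁,b₂}*`. -/
abbrev T22 : Type := List Letter

/-- `T₂ = {1,2}*`. -/
abbrev T2W : Type := List (Fin 2)

/-- First relation of `𝕋₂,₂`: append a word over the a-letters. -/
def R1T (w w' : T22) : Prop := ∃ c : T22, (∀ l ∈ c, l.1 = false) ∧ w' = w ++ c

/-- Second relation of `𝕋₂,₂`: append a word over the b-letters. -/
def R2T (w w' : T22) : Prop := ∃ d : T22, (∀ l ∈ d, l.1 = true) ∧ w' = w ++ d

/-- The carrier of `𝕋₂,₂₊₂` : `⟨a, root⟩` is encoded as `(a, none)` and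
`⟨a, b⟩` with `b ∈ T₂` as `(a, some b)`. -/
abbrev W222 : Type := T22 × Option T2W

/-- Generators of `R₁′`. -/
def R1'gen : W222 → W222 → Prop := fun x y =>
  (∃ a a', R1T a a' ∧ x = (a, none) ∧ y = (a', none)) ∨
  (∃ a, x = (a, none) ∧ y = (a, some ([] : T2W)))

/-- `R₁′`: smallest reflexive transitive relation containing the generators. -/
def R1' : W222 → W222 → Prop := Relation.ReflTransGen R1'gen

/-- Generators of `R₂′`. -/
def R2'gen : W222 → W222 → Prop := fun x y =>
  (∃ a a', R2T a a' ∧ x = (a, none) ∧ y = (a', none)) ∨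
  (∃ a b b', b <+: b' ∧ x = (a, some b) ∧ y = (a, some b'))

/-- `R₂′`: smallest reflexive transitive relation containing the generators. -/
def R2' : W222 → W222 → Prop := Relation.ReflTransGen R2'gen

/- ============== Pseudo-infinite paths and the spaces 𝒴 and 𝔛 ============== -/

/-- Infinite sequences over {0,1,2}: `none` encodes 0 and `some i` encodes
`i+1 ∈ {1,2}`. -/
abbrev Seq3 : Type := ℕ → Option (Fin 2)

/-- `W_ω`: pseudo-infinite paths, i.e. sequences with finitely many nonzero
entries. -/
def Wom : Type := {s : Seq3 // {k | s k ≠ none}.Finite}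

/-- `st(s)`: the least `N` such that all entries from `N` on are zero. -/
noncomputable def stN {γ : Type} (s : ℕ → Option γ) : ℕ :=
  sInf {N | ∀ k, N ≤ k → s k = none}

/-- The first `k` entries of a sequence, as a finite word. -/
def takeSeq {γ : Type} (s : ℕ → Option γ) (k : ℕ) : List (Option γ) :=
  List.ofFn (fun i : Fin k => s i.1)

/-- `f_F`: delete all zeros from a finite word. -/
def fF {γ : Type} (l : List (Option γ)) : List γ := l.filterMap id

/-- `f_ω`: delete the zeros from a pseudo-infinite path, producing a finite word. -/
noncomputable def squash {γ : Type} (s : ℕ → Option γ) : List γ := fF (takeSeq s (stN s))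

/-- The basic set `U_k(α) = {β ∈ W_ω : α↾k = β↾k and f_F(α↾k) ⊑ f_ω(β)}`. -/
def Uset (α : Wom) (k : ℕ) : Set Wom :=
  {β | takeSeq β.1 k = takeSeq α.1 k ∧ fF (takeSeq α.1 k) <+: squash β.1}

/-- The topology `T_ω` on `W_ω` generated by the base `{U_k(α) : k > 0}`;
`𝒴 = (W_ω, T_ω)`. -/
def Tom : TopologicalSpace Wom :=
  TopologicalSpace.generateFrom {S | ∃ α k, 0 < k ∧ S = Uset α k}

/-- The basic sets of the space `𝔛`:
`U′_k(α,0) = (U_k(α) × {0}) ∪ (U_k(α) × {n ≥ k})` and `U′_k(α,n) = {⟨α,n⟩}`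
for `n ≥ 1`. -/
def U'set (α : Wom) (k n : ℕ) : Set (Wom × ℕ) :=
  if n = 0 then (Uset α k ×ˢ ({0} : Set ℕ)) ∪ (Uset α k ×ˢ {m : ℕ | k ≤ m})
  else {(α, n)}

/-- The topology of the space `𝔛 = (W_ω × ℕ, T)`. -/
def TX : TopologicalSpace (Wom × ℕ) :=
  TopologicalSpace.generateFrom {S | ∃ α k n, S = U'set α k n}

/-- Interleaving of two paths: the sequence `a_{x₁} b_{y₁} a_{x₂} b_{y₂} …`
(with `a₀ = b₀ = 0`). -/
def interleave (α β : Seq3) : ℕ → Option Letter := fun n =>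
  if n % 2 = 0 then (α (n / 2)).map (fun v => ((false, v) : Letter))
  else (β (n / 2)).map (fun v => ((true, v) : Letter))

/-- The map `g : W_ω × W_ω → T₂,₂` obtained by interleaving and deleting zeros. -/
noncomputable def gmap (α β : Seq3) : T22 := squash (interleave α β)

/-- `g` as a map on pairs. -/
noncomputable def gPair : Wom × Wom → T22 := fun q => gmap q.1.1 q.2.1

/-- `s↾n · 0^ω`. -/
def truncSeq (s : Seq3) (n : ℕ) : Seq3 := fun k => if k < n then s k else none

/-- The tail `γ` of `s = s↾n · γ`. -/
def shiftSeq (s : Seq3) (n : ℕ) : Seq3 := fun k => s (n + k)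

/-- The map `f : 𝔛 × 𝒴 → 𝕋₂,₂₊₂` :
`f(⟨α,0⟩,β) = ⟨g(α,β), root⟩` and for `n ≥ 1`,
`f(⟨α,n⟩,β) = ⟨g(α↾n·0^ω, β↾n·0^ω), f_ω(γ)⟩` where `β = β↾n·γ`. -/
noncomputable def fXY : (Wom × ℕ) × Wom → W222 := fun q =>
  if q.1.2 = 0 then (gmap q.1.1.1 q.2.1, none)
  else (gmap (truncSeq q.1.1.1 q.1.2) (truncSeq q.2.1 q.1.2),
        some (squash (shiftSeq q.2.1 q.1.2)))

/-- An effective encoding of bimodal formulas by natural numbers. -/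
def encodeB : BForm → ℕ
  | .var n => Nat.pair 0 n
  | .bot => Nat.pair 1 0
  | .imp A B => Nat.pair 2 (Nat.pair (encodeB A) (encodeB B))
  | .box i A => Nat.pair 3 (Nat.pair i.1 (encodeB A))

/-!
This is a filtration argument turned into a primitive recursive search.

In the canonical model of `LL`, the axioms `◇₁□₂(◇₁A → □₁A)` put, `□₁`-above every point, a point
`Γ` such that at `Γ` and at every point `□₂`-accessible from it, `A → □₁A` holds for all of the
finitely many formulas `A` with code below a bound `N`. Record of each point only the finite set
of codes below `N` of its formulas: the result is a finite set `S` of types with a subset `M`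
coming from the points like `Γ`. Conversely, such a pair `(S, M)` yields a finite frame on `S` in
which every point of `M` is its own only `R₁`-successor and has all its `R₂`-successors in `M`;
this frame validates `LL`, and a type in `S` omitting the code of `A` refutes `A` there. Hence
`A ∉ LL` if and only if one of finitely many candidates for `(S, M)` refutes `A`.
-/

/-! ### Primitive recursive predicates -/

section PrimitiveRecursive

variable {α β : Type} [Primcodable α] [Primcodable β]

theorem primrecPred_imp {p q : α → Prop} (hp : PrimrecPred p) (hq : PrimrecPred q) :
    PrimrecPred fun a => p a → q a :=
  (hp.not.or hq).of_eq fun _ => imp_iff_not_or.symm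

theorem primrecPred_iff {p q : α → Prop} (hp : PrimrecPred p) (hq : PrimrecPred q) :
    PrimrecPred fun a => p a ↔ q a :=
  ((primrecPred_imp hp hq).and (primrecPred_imp hq hp)).of_eq fun _ =>
    iff_iff_implies_and_implies.symm

theorem primrecPred_exists_mem {l : α → List β} {p : α → β → Prop} (hl : Primrec l)
    (hp : PrimrecPred fun q : α × β => p q.1 q.2) : PrimrecPred fun a => ∃ b ∈ l a, p a b :=
  (PrimrecRel.exists_mem_list (R := fun b a => p a b) (hp.comp (.pair .snd .fst))).comp hl .id

theorem primrecPred_forall_mem {l : α → List β} {p : α → β → Prop} (hl : Primrec l)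
    (hp : PrimrecPred fun q : α × β => p q.1 q.2) : PrimrecPred fun a => ∀ b ∈ l a, p a b :=
  (PrimrecRel.forall_mem_list (R := fun b a => p a b) (hp.comp (.pair .snd .fst))).comp hl .id

theorem primrecPred_forall_lt {n : α → ℕ} {p : α → ℕ → Prop} (hn : Primrec n)
    (hp : PrimrecPred fun q : α × ℕ => p q.1 q.2) : PrimrecPred fun a => ∀ k < n a, p a k :=
  (primrecPred_forall_mem (Primrec.list_range.comp hn) hp).of_eq fun _ => by
    simp only [List.mem_range]

theorem primrecPred_forall_finite [Finite β] {p : α → β → Prop}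
    (hp : PrimrecPred fun q : α × β => p q.1 q.2) : PrimrecPred fun a => ∀ b, p a b := by
  have := Fintype.ofFinite β
  exact (primrecPred_forall_mem (.const Finset.univ.toList) hp).of_eq fun _ => by
    simp only [Finset.mem_toList, Finset.mem_univ, forall_const]

theorem primrecPred_mem {b : α → β} {l : α → List β} (hb : Primrec b) (hl : Primrec l) :
    PrimrecPred fun a => b a ∈ l a :=
  (primrecPred_exists_mem (p := fun a c => c = b a) hl
    (Primrec.eq.comp .snd (hb.comp .fst))).of_eq fun _ => by simp only [exists_eq_right]

theorem primrec_sublists' : Primrec (List.sublists' : List β → List (List β)) := by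
  refine (Primrec.list_foldr (f := id) (g := fun _ => [[]])
    (h := fun _ p => p.2 ++ p.2.map (List.cons p.1)) .id (.const _) ?_).of_eq fun l => ?_
  · have htail : Primrec fun q : List β × β × List (List β) => q.2.2 := .comp .snd .snd
    exact Primrec.list_append.comp htail
      (Primrec.list_map htail (Primrec.list_cons.comp (.comp .fst (.comp .snd .fst)) .snd))
  · induction l with
    | nil => rfl
    | cons a l ih => rw [List.sublists'_cons, ← ih]; rfl

end PrimitiveRecursive

/-! ### Kripke frames of `LL` -/

section KripkeSoundness

variable {W : Type}

theorem mkSat_subst {R : W → W → Prop} {V : ℕ → W → Prop} (σ : ℕ → MForm) {x : W} (A : MForm) :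
    MKSat R V x (A.subst σ) ↔ MKSat R (fun k y => MKSat R V y (σ k)) x A := by
  induction A generalizing x <;> simp_all only [MForm.subst, MKSat]

theorem bSat_subst {R : Fin 2 → W → W → Prop} {V : ℕ → W → Prop} (σ : ℕ → BForm) {x : W}
    (A : BForm) : BSat R V x (A.subst σ) ↔ BSat R (fun k y => BSat R V y (σ k)) x A := by
  induction A generalizing x <;> simp_all only [BForm.subst, BSat]

theorem bSat_toB {R : Fin 2 → W → W → Prop} {V : ℕ → W → Prop} (i : Fin 2) {x : W} (A : MForm) :
    BSat R V x (A.toB i) ↔ MKSat (R i) V x A := by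
  induction A generalizing x <;> simp_all only [MForm.toB, BSat, MKSat]

theorem MProv.mkValid {Ax : Set MForm} {R : W → W → Prop} (hAx : ∀ A ∈ Ax, MKValid R A)
    {A : MForm} (hA : MProv Ax A) : MKValid R A := by
  induction hA with
  | axm h => exact hAx _ h
  | pl1 => exact fun _ _ hA _ => hA
  | pl2 => exact fun _ _ hABC hAB hA => hABC hA (hAB hA)
  | pl3 => exact fun _ _ hA => by_contra hA
  | kax => exact fun _ _ hAB hA y hy => hAB y hy (hA y hy)
  | mp _ _ ihAB ihA => exact fun V x => ihAB V x (ihA V x)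
  | nec _ ih => exact fun V _ y _ => ih V y
  | subst σ _ ih => exact fun _ x => (mkSat_subst σ _).2 (ih _ x)

theorem BProv.bValid {Ax : Set BForm} {R : Fin 2 → W → W → Prop} (hAx : ∀ A ∈ Ax, BValid R A)
    {A : BForm} (hA : BProv Ax A) : BValid R A := by
  induction hA with
  | axm h => exact hAx _ h
  | pl1 => exact fun _ _ hA _ => hA
  | pl2 => exact fun _ _ hABC hAB hA => hABC hA (hAB hA)
  | pl3 => exact fun _ _ hA => by_contra hA
  | kax => exact fun _ _ hAB hA y hy => hAB y hy (hA y hy)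
  | mp _ _ ihAB ihA => exact fun V x => ihAB V x (ihA V x)
  | nec _ _ ih => exact fun V _ y _ => ih V y
  | subst σ _ ih => exact fun _ x => (bSat_subst σ _).2 (ih _ x)

theorem mkValid_of_mem_S4Ax {R : W → W → Prop} (hrefl : ∀ x, R x x)
    (htrans : ∀ x y z, R x y → R y z → R x z) {A : MForm} (hA : A ∈ S4Ax) : MKValid R A := by
  rcases hA with rfl | rfl
  · exact fun _ x h => h x (hrefl x)
  · exact fun _ x h y hxy z hyz => h z (htrans x y z hxy hyz)

theorem mkValid_McKM {R : W → W → Prop} (hfinal : ∀ x, ∃ y, R x y ∧ ∀ z, R y z → z = y) :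
    MKValid R McKM := by
  intro V x hboxdia hbox
  obtain ⟨y, hxy, hy⟩ := hfinal x
  refine hboxdia y hxy fun z hyz hp => hbox y hxy fun w hyw => ?_
  rwa [hy w hyw, ← hy z hyz]

theorem bValid_MKB {R : Fin 2 → W → W → Prop}
    (hfinal : ∀ x, ∃ y, R 0 x y ∧ ∀ z, R 1 y z → ∀ w, R 0 z w → w = z) : BValid R MKB := by
  intro V x hbox
  obtain ⟨y, hxy, hy⟩ := hfinal x
  refine hbox y hxy fun z hyz hdia w hzw => ?_
  by_contra hw
  refine hdia fun v hzv hv => hw ?_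
  rwa [hy z hyz w hzw, ← hy z hyz v hzv]

/-- The frames of `LL` used as countermodels: two preorders such that every point sees, along the
first, a point all of whose successors along the second are maximal for the first. The second
preorder being reflexive, that point is itself maximal, as McKinsey's formula needs. -/
structure IsLLFrame (R : Fin 2 → W → W → Prop) : Prop where
  refl : ∀ i x, R i x x
  trans : ∀ i x y z, R i x y → R i y z → R i x z
  exists_final : ∀ x, ∃ y, R 0 x y ∧ ∀ z, R 1 y z → ∀ w, R 0 z w → w = z

theorem IsLLFrame.bValid_of_mem_LL {R : Fin 2 → W → W → Prop} (hR : IsLLFrame R) {A : BForm}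
    (hA : A ∈ LL) : BValid R A := by
  have hS4 (i : Fin 2) : ∀ B ∈ S4Ax, MKValid (R i) B := fun _ =>
    mkValid_of_mem_S4Ax (hR.refl i) (hR.trans i)
  have hS41 : ∀ B ∈ S4Ax ∪ {McKM}, MKValid (R 0) B := by
    rintro B (hB | rfl)
    · exact hS4 0 B hB
    · refine mkValid_McKM fun x => ?_
      obtain ⟨y, hxy, hy⟩ := hR.exists_final x
      exact ⟨y, hxy, hy y (hR.refl 1 y)⟩
  refine BProv.bValid ?_ hA
  rintro _ ((⟨B, hB, rfl⟩ | ⟨B, hB, rfl⟩) | rfl)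
  · exact fun V x => (bSat_toB 0 B).2 (hB.mkValid hS41 V x)
  · exact fun V x => (bSat_toB 1 B).2 (hB.mkValid (hS4 1) V x)
  · exact bValid_MKB hR.exists_final

end KripkeSoundness

/-! ### Quasimodels -/

/-- The code of `A → B` in terms of the codes of `A` and `B`, following `encodeB`. -/
def impCode (a b : ℕ) : ℕ := Nat.pair 2 (Nat.pair a b)

/-- The code of `□ᵢA` in terms of the code of `A`, following `encodeB`. -/
def boxCode (i : Fin 2) (a : ℕ) : ℕ := Nat.pair 3 (Nat.pair i a)

theorem left_le_impCode (a b : ℕ) : a ≤ impCode a b :=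
  (Nat.left_le_pair a b).trans (Nat.right_le_pair 2 _)

theorem right_le_impCode (a b : ℕ) : b ≤ impCode a b :=
  (Nat.right_le_pair a b).trans (Nat.right_le_pair 2 _)

theorem le_boxCode (i : Fin 2) (a : ℕ) : a ≤ boxCode i a :=
  (Nat.right_le_pair i a).trans (Nat.right_le_pair 3 _)

/-- A type, i.e. a list `t` of codes, is saturated if it is closed, as far as formulas with code
below `N` are concerned, under the truth conditions of `⊥` and `→` and the reflexivity of `□ᵢ`. -/
structure IsSaturated (N : ℕ) (t : List ℕ) : Prop where
  bot_notMem : encodeB .bot ∉ t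
  impCode_mem_iff : ∀ a < N, ∀ b < N, impCode a b < N → (impCode a b ∈ t ↔ (a ∈ t → b ∈ t))
  mem_of_boxCode_mem : ∀ i, ∀ a < N, boxCode i a ∈ t → a ∈ t

/-- Accessibility along `□ᵢ` between types: formulas `□ᵢA` are inherited, which makes the relation
transitive. -/
def Accessible (N : ℕ) (i : Fin 2) (t u : List ℕ) : Prop :=
  ∀ a < N, boxCode i a ∈ t → boxCode i a ∈ u

/-- Every formula `□ᵢA` missing from the type `t` is refuted by an accessible type in `S`. -/
def HasWitnesses (N : ℕ) (i : Fin 2) (S : List (List ℕ)) (t : List ℕ) : Prop :=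
  ∀ a < N, boxCode i a < N → boxCode i a ∉ t → ∃ u ∈ S, Accessible N i t u ∧ a ∉ u

/-- A quasimodel: a finite set `S` of types with a subset `M` of types which are to become maximal
for the first relation, so that they must contain `□₁A` along with `A`. -/
structure IsQuasimodel (N : ℕ) (S M : List (List ℕ)) : Prop where
  subset : ∀ u ∈ M, u ∈ S
  isSaturated : ∀ t ∈ S, IsSaturated N t
  hasWitnesses : ∀ i, ∀ t ∈ S, HasWitnesses N i S t
  exists_accessible : ∀ t ∈ S, ∃ u ∈ M, Accessible N 0 t u
  boxCode_mem : ∀ u ∈ M, ∀ a < N, boxCode 0 a < N → a ∈ u → boxCode 0 a ∈ u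
  hasWitnesses_one : ∀ u ∈ M, HasWitnesses N 1 M u

/-- The relations on the types of a quasimodel: accessibility, restricted so that the types in `M`
are maximal for the first relation and `M` is closed under the second. -/
def quasiRel (N : ℕ) (S M : List (List ℕ)) (i : Fin 2) (t u : {t // t ∈ S}) : Prop :=
  Accessible N i t u ∧ (t.1 ∈ M → if i = 0 then u = t else u.1 ∈ M)

theorem Accessible.refl (N : ℕ) (i : Fin 2) (t : List ℕ) : Accessible N i t t :=
  fun _ _ h => h

theorem Accessible.trans {N : ℕ} {i : Fin 2} {t u v : List ℕ} (htu : Accessible N i t u)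
    (huv : Accessible N i u v) : Accessible N i t v :=
  fun a ha h => huv a ha (htu a ha h)

namespace IsQuasimodel

variable {N : ℕ} {S M : List (List ℕ)}

theorem isLLFrame_quasiRel (h : IsQuasimodel N S M) : IsLLFrame (quasiRel N S M) where
  refl i t := ⟨.refl N i t, fun ht => by split_ifs; exacts [rfl, ht]⟩
  trans i t u v := by
    rintro ⟨htu, htu'⟩ ⟨huv, huv'⟩
    refine ⟨htu.trans huv, fun ht => ?_⟩
    split_ifs at htu' huv' ⊢
    · obtain rfl := htu' ht
      exact huv' ht
    · exact huv' (htu' ht)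
  exists_final t := by
    have hfinal (u : {t // t ∈ S}) (hu : u.1 ∈ M) (v) (huv : quasiRel N S M 1 u v) (w)
        (hvw : quasiRel N S M 0 v w) : w = v := hvw.2 (huv.2 hu)
    by_cases ht : t.1 ∈ M
    · exact ⟨t, ⟨.refl N 0 t, fun _ => rfl⟩, hfinal t ht⟩
    · obtain ⟨u, hu, htu⟩ := h.exists_accessible t t.2
      exact ⟨⟨u, h.subset u hu⟩, ⟨htu, fun ht' => absurd ht' ht⟩, hfinal _ hu⟩

theorem exists_quasiRel_notMem (h : IsQuasimodel N S M) {i : Fin 2} {t : {t // t ∈ S}} {a : ℕ}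
    (ha : boxCode i a < N) (hbox : boxCode i a ∉ t.1) :
    ∃ u, quasiRel N S M i t u ∧ a ∉ u.1 := by
  have ha' : a < N := (le_boxCode i a).trans_lt ha
  by_cases ht : t.1 ∈ M
  · match i with
    | 0 => exact ⟨t, ⟨.refl N 0 t, fun _ => rfl⟩, mt (h.boxCode_mem t ht a ha' ha) hbox⟩
    | 1 =>
      obtain ⟨u, hu, htu, hau⟩ := h.hasWitnesses_one t ht a ha' ha hbox
      exact ⟨⟨u, h.subset u hu⟩, ⟨htu, fun _ => hu⟩, hau⟩
  · obtain ⟨u, hu, htu, hau⟩ := h.hasWitnesses i t t.2 a ha' ha hbox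
    exact ⟨⟨u, hu⟩, ⟨htu, fun ht' => absurd ht' ht⟩, hau⟩

theorem bSat_quasiRel_iff (h : IsQuasimodel N S M) (A : BForm) (hA : encodeB A < N)
    (t : {t // t ∈ S}) :
    BSat (quasiRel N S M) (fun k u => encodeB (.var k) ∈ u.1) t A ↔ encodeB A ∈ t.1 := by
  induction A generalizing t with
  | var k => exact Iff.rfl
  | bot => exact iff_of_false id (h.isSaturated t t.2).bot_notMem
  | imp A B ihA ihB =>
    have hltA : encodeB A < N := (left_le_impCode _ _).trans_lt hA
    have hltB : encodeB B < N := (right_le_impCode _ _).trans_lt hA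
    exact (imp_congr (ihA hltA t) (ihB hltB t)).trans
      ((h.isSaturated t t.2).impCode_mem_iff _ hltA _ hltB hA).symm
  | box i A ih =>
    have hltA : encodeB A < N := (le_boxCode i _).trans_lt hA
    refine ⟨fun hsat => ?_, fun hbox u htu => ?_⟩
    · by_contra hbox
      obtain ⟨u, htu, hu⟩ := h.exists_quasiRel_notMem hA hbox
      exact hu ((ih hltA u).1 (hsat u htu))
    · exact (ih hltA u).2
        ((h.isSaturated u u.2).mem_of_boxCode_mem i _ hltA (htu.1 _ hltA hbox))

theorem notMem_LL (h : IsQuasimodel N S M) {t : List ℕ} (ht : t ∈ S) {A : BForm}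
    (hA : encodeB A < N) (hAt : encodeB A ∉ t) : A ∉ LL := fun hLL =>
  hAt ((h.bSat_quasiRel_iff A hA ⟨t, ht⟩).1 (h.isLLFrame_quasiRel.bValid_of_mem_LL hLL _ _))

end IsQuasimodel

/-- The candidates for the components of a quasimodel: the sets of types over the codes below `N`,
each represented by the sublist of its elements. -/
def typeLists (N : ℕ) : List (List (List ℕ)) :=
  List.sublists' (List.sublists' (List.range N))

/-- The search problem deciding `LL`: some quasimodel over the codes up to `c` has a type omitting
the code `c`. -/
def Refutable (c : ℕ) : Prop :=
  ∃ S ∈ typeLists (c + 1), ∃ M ∈ typeLists (c + 1), IsQuasimodel (c + 1) S M ∧ ∃ t ∈ S, c ∉ t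

/-! ### The search is primitive recursive -/

section PrimitiveRecursive

attribute [fun_prop] Primrec
attribute [fun_prop] Primrec.id Primrec.const Primrec.comp Primrec.fst Primrec.snd Primrec.pair

variable {α : Type} [Primcodable α]

@[fun_prop]
theorem primrec_impCode {a b : α → ℕ} (ha : Primrec a) (hb : Primrec b) :
    Primrec fun x => impCode (a x) (b x) :=
  Primrec₂.natPair.comp (.const 2) (Primrec₂.natPair.comp ha hb)

@[fun_prop]
theorem primrec_boxCode {i : α → Fin 2} {a : α → ℕ} (hi : Primrec i) (ha : Primrec a) :
    Primrec fun x => boxCode (i x) (a x) :=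
  Primrec₂.natPair.comp (.const 3) (Primrec₂.natPair.comp (Primrec.fin_val.comp hi) ha)

theorem primrecPred_lt {a b : α → ℕ} (ha : Primrec a) (hb : Primrec b) :
    PrimrecPred fun x => a x < b x :=
  Primrec.nat_lt.comp ha hb

theorem primrecPred_isSaturated {N : α → ℕ} {t : α → List ℕ} (hN : Primrec N) (ht : Primrec t) :
    PrimrecPred fun x => IsSaturated (N x) (t x) := by
  have hconj : PrimrecPred fun x => encodeB .bot ∉ t x ∧
      (∀ a < N x, ∀ b < N x, impCode a b < N x →
        (impCode a b ∈ t x ↔ (a ∈ t x → b ∈ t x))) ∧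
      (∀ i, ∀ a < N x, boxCode i a ∈ t x → a ∈ t x) := by
    apply_rules [PrimrecPred.and, PrimrecPred.not, primrecPred_mem, primrecPred_forall_lt,
      primrecPred_forall_finite, primrecPred_imp, primrecPred_iff, primrecPred_lt] <;> fun_prop
  exact hconj.of_eq fun _ => ⟨fun ⟨h₁, h₂, h₃⟩ => ⟨h₁, h₂, h₃⟩, fun ⟨h₁, h₂, h₃⟩ => ⟨h₁, h₂, h₃⟩⟩

theorem primrecPred_accessible {N : α → ℕ} {i : α → Fin 2} {t u : α → List ℕ} (hN : Primrec N)
    (hi : Primrec i) (ht : Primrec t) (hu : Primrec u) :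
    PrimrecPred fun x => Accessible (N x) (i x) (t x) (u x) := by
  unfold Accessible
  apply_rules [primrecPred_forall_lt, primrecPred_imp, primrecPred_mem] <;> fun_prop

theorem primrecPred_hasWitnesses {N : α → ℕ} {i : α → Fin 2} {S : α → List (List ℕ)}
    {t : α → List ℕ} (hN : Primrec N) (hi : Primrec i) (hS : Primrec S) (ht : Primrec t) :
    PrimrecPred fun x => HasWitnesses (N x) (i x) (S x) (t x) := by
  unfold HasWitnesses
  apply_rules [PrimrecPred.and, PrimrecPred.not, primrecPred_mem, primrecPred_forall_lt,
    primrecPred_exists_mem, primrecPred_imp, primrecPred_lt, primrecPred_accessible] <;> fun_prop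

theorem primrecPred_isQuasimodel {N : α → ℕ} {S M : α → List (List ℕ)} (hN : Primrec N)
    (hS : Primrec S) (hM : Primrec M) : PrimrecPred fun x => IsQuasimodel (N x) (S x) (M x) := by
  have hsubset : PrimrecPred fun x => ∀ u ∈ M x, u ∈ S x :=
    primrecPred_forall_mem hM (primrecPred_mem (by fun_prop) (by fun_prop))
  have hsaturated : PrimrecPred fun x => ∀ t ∈ S x, IsSaturated (N x) t :=
    primrecPred_forall_mem hS (primrecPred_isSaturated (by fun_prop) (by fun_prop))
  have hwitnesses : PrimrecPred fun x => ∀ i, ∀ t ∈ S x, HasWitnesses (N x) i (S x) t :=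
    primrecPred_forall_finite <| primrecPred_forall_mem (by fun_prop) <|
      primrecPred_hasWitnesses (by fun_prop) (by fun_prop) (by fun_prop) (by fun_prop)
  have haccessible : PrimrecPred fun x => ∀ t ∈ S x, ∃ u ∈ M x, Accessible (N x) 0 t u :=
    primrecPred_forall_mem hS <| primrecPred_exists_mem (by fun_prop) <|
      primrecPred_accessible (by fun_prop) (by fun_prop) (by fun_prop) (by fun_prop)
  have hboxCode : PrimrecPred fun x =>
      ∀ u ∈ M x, ∀ a < N x, boxCode 0 a < N x → a ∈ u → boxCode 0 a ∈ u := by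
    apply_rules [primrecPred_forall_mem, primrecPred_forall_lt, primrecPred_imp, primrecPred_lt,
      primrecPred_mem] <;> fun_prop
  have hwitnesses_one : PrimrecPred fun x => ∀ u ∈ M x, HasWitnesses (N x) 1 (M x) u :=
    primrecPred_forall_mem hM <|
      primrecPred_hasWitnesses (by fun_prop) (by fun_prop) (by fun_prop) (by fun_prop)
  have hconj := hsubset.and <| hsaturated.and <| hwitnesses.and <| haccessible.and <|
    hboxCode.and hwitnesses_one
  exact hconj.of_eq fun _ =>
    ⟨fun ⟨h₁, h₂, h₃, h₄, h₅, h₆⟩ => ⟨h₁, h₂, h₃, h₄, h₅, h₆⟩,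
      fun ⟨h₁, h₂, h₃, h₄, h₅, h₆⟩ => ⟨h₁, h₂, h₃, h₄, h₅, h₆⟩⟩

theorem primrecPred_refutable : PrimrecPred Refutable := by
  have hN : Primrec fun c : ℕ => c + 1 := .succ
  have hcand : Primrec typeLists :=
    primrec_sublists'.comp (primrec_sublists'.comp Primrec.list_range)
  refine primrecPred_exists_mem (hcand.comp hN) (primrecPred_exists_mem ?_ (.and ?_ ?_))
  · exact (hcand.comp hN).comp .fst
  · exact primrecPred_isQuasimodel (hN.comp (.comp .fst .fst)) (by fun_prop) (by fun_prop)
  · exact primrecPred_exists_mem (by fun_prop) (primrecPred_mem (by fun_prop) (by fun_prop)).not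

end PrimitiveRecursive

/-! ### Maximal consistent sets -/

/-- Derivability from the assumptions `Γ` in the normal logic axiomatized by `Ax`: necessitation and
substitution apply to theorems of the logic only. -/
inductive Derives (Ax Γ : Set BForm) : BForm → Prop
  | thm {A : BForm} : BProv Ax A → Derives Ax Γ A
  | hyp {A : BForm} : A ∈ Γ → Derives Ax Γ A
  | mp {A B : BForm} : Derives Ax Γ (A.imp B) → Derives Ax Γ A → Derives Ax Γ B

/-- Maximal consistent sets of the normal logic axiomatized by `Ax`, the points of its canonical
model. Maximality is expressed by completeness: `Γ` decides every formula. -/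
structure IsMaxConsistent (Ax Γ : Set BForm) : Prop where
  mem_of_derives : ∀ A, Derives Ax Γ A → A ∈ Γ
  bot_notMem : BForm.bot ∉ Γ
  mem_or_neg_mem : ∀ A, A ∈ Γ ∨ A.neg ∈ Γ

/-- The accessibility relation of `□ᵢ` in the canonical model. -/
def CanonRel (i : Fin 2) (Γ Δ : Set BForm) : Prop := ∀ A, BForm.box i A ∈ Γ → A ∈ Δ

section MaxConsistent

variable {Ax Γ Δ : Set BForm} {A B : BForm}

namespace Derives

theorem mono (hΓΔ : Γ ⊆ Δ) (h : Derives Ax Γ A) : Derives Ax Δ A := by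
  induction h with
  | thm hA => exact .thm hA
  | hyp hA => exact .hyp (hΓΔ hA)
  | mp _ _ ihAB ihA => exact .mp ihAB ihA

theorem bProv_of_empty (h : Derives Ax ∅ A) : BProv Ax A := by
  induction h with
  | thm hA => exact hA
  | hyp hA => exact absurd hA (Set.notMem_empty _)
  | mp _ _ ihAB ihA => exact .mp ihAB ihA

theorem imp_of_insert (h : Derives Ax (insert A Γ) B) : Derives Ax Γ (A.imp B) := by
  induction h with
  | thm hB => exact .mp (.thm .pl1) (.thm hB)
  | hyp hB =>
    rcases hB with rfl | hB
    · exact .mp (.mp (.thm .pl2) (.thm .pl1)) (.thm (.pl1 (B := .bot)))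
    · exact .mp (.thm .pl1) (.hyp hB)
  | mp _ _ ihAB ihA => exact .mp (.mp (.thm .pl2) ihAB) ihA

theorem exists_of_sUnion {c : Set (Set BForm)} (hc : IsChain (· ⊆ ·) c) (hne : c.Nonempty)
    (h : Derives Ax (⋃₀ c) A) : ∃ Γ ∈ c, Derives Ax Γ A := by
  induction h with
  | thm hA => exact hne.imp fun Γ hΓ => ⟨hΓ, .thm hA⟩
  | hyp hA =>
    obtain ⟨Γ, hΓ, hA⟩ := hA
    exact ⟨Γ, hΓ, .hyp hA⟩
  | mp _ _ ihAB ihA =>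
    obtain ⟨Γ, hΓ, hAB⟩ := ihAB
    obtain ⟨Δ, hΔ, hA⟩ := ihA
    rcases hc.total hΓ hΔ with hsub | hsub
    · exact ⟨Δ, hΔ, .mp (hAB.mono hsub) hA⟩
    · exact ⟨Γ, hΓ, .mp hAB (hA.mono hsub)⟩

end Derives

theorem isMaxConsistent_of_maximal (hΓ : Maximal (fun Γ => ¬ Derives Ax Γ .bot) Γ) :
    IsMaxConsistent Ax Γ := by
  have hcons : ¬ Derives Ax Γ .bot := hΓ.prop
  have hmem (A : BForm) (hA : ¬ Derives Ax (insert A Γ) .bot) : A ∈ Γ :=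
    hΓ.le_of_ge hA (Set.subset_insert A Γ) (Set.mem_insert A Γ)
  refine ⟨fun A hA => hmem A fun hbot => hcons (.mp hbot.imp_of_insert hA),
    fun hbot => hcons (.hyp hbot), fun A => ?_⟩
  by_contra! ⟨hA, hnegA⟩
  have hbot : Derives Ax (insert A Γ) .bot := by_contra fun h => hA (hmem _ h)
  have hbot' : Derives Ax (insert A.neg Γ) .bot := by_contra fun h => hnegA (hmem _ h)
  exact hcons (.mp hbot'.imp_of_insert hbot.imp_of_insert)

theorem exists_isMaxConsistent_notMem (hA : ¬ Derives Ax Γ A) :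
    ∃ Δ, IsMaxConsistent Ax Δ ∧ Γ ⊆ Δ ∧ A ∉ Δ := by
  have hcons : ¬ Derives Ax (insert A.neg Γ) .bot := fun hbot =>
    hA (.mp (.thm .pl3) hbot.imp_of_insert)
  obtain ⟨Δ, hsub, hmax⟩ := zorn_subset_nonempty {Δ : Set BForm | ¬ Derives Ax Δ .bot}
    (fun c hcons hchain hne => ⟨⋃₀ c, fun hbot => by
      obtain ⟨Θ, hΘ, hbot⟩ := hbot.exists_of_sUnion hchain hne
      exact hcons hΘ hbot, fun _ => Set.subset_sUnion_of_mem⟩) _ hcons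
  refine ⟨Δ, isMaxConsistent_of_maximal hmax, (Set.subset_insert _ _).trans hsub, fun hA => ?_⟩
  exact hmax.prop (.mp (.hyp (hsub (Set.mem_insert _ _))) (.hyp hA))

theorem exists_isMaxConsistent_of_not_bProv (hA : ¬ BProv Ax A) :
    ∃ Γ, IsMaxConsistent Ax Γ ∧ A ∉ Γ := by
  obtain ⟨Γ, hΓ, -, hAΓ⟩ := exists_isMaxConsistent_notMem (mt Derives.bProv_of_empty hA)
  exact ⟨Γ, hΓ, hAΓ⟩

namespace IsMaxConsistent

theorem mem_of_bProv (hΓ : IsMaxConsistent Ax Γ) (hA : BProv Ax A) : A ∈ Γ :=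
  hΓ.mem_of_derives _ (.thm hA)

theorem mem_of_imp_mem (hΓ : IsMaxConsistent Ax Γ) (hAB : A.imp B ∈ Γ) (hA : A ∈ Γ) : B ∈ Γ :=
  hΓ.mem_of_derives _ (.mp (.hyp hAB) (.hyp hA))

theorem neg_mem_iff (hΓ : IsMaxConsistent Ax Γ) : A.neg ∈ Γ ↔ A ∉ Γ :=
  ⟨fun hnegA hA => hΓ.bot_notMem (hΓ.mem_of_imp_mem hnegA hA), (hΓ.mem_or_neg_mem A).resolve_left⟩

theorem imp_mem_iff (hΓ : IsMaxConsistent Ax Γ) : A.imp B ∈ Γ ↔ (A ∈ Γ → B ∈ Γ) := by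
  refine ⟨hΓ.mem_of_imp_mem, fun hAB => ?_⟩
  by_cases hA : A ∈ Γ
  · exact hΓ.mem_of_derives _ (.mp (.thm .pl1) (.hyp (hAB hA)))
  · have hbot : Derives Ax (insert A Γ) .bot :=
      .mp (.hyp (Set.mem_insert_of_mem _ (hΓ.neg_mem_iff.2 hA))) (.hyp (Set.mem_insert _ _))
    exact hΓ.mem_of_derives _ (Derives.imp_of_insert (.mp (.thm .pl3) (.mp (.thm .pl1) hbot)))

theorem exists_canonRel_notMem (hΓ : IsMaxConsistent Ax Γ) {i : Fin 2}
    (hA : BForm.box i A ∉ Γ) : ∃ Δ, IsMaxConsistent Ax Δ ∧ CanonRel i Γ Δ ∧ A ∉ Δ := by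
  have hbox {B : BForm} (hB : Derives Ax {C | BForm.box i C ∈ Γ} B) : BForm.box i B ∈ Γ := by
    induction hB with
    | thm hB => exact hΓ.mem_of_bProv (.nec i hB)
    | hyp hB => exact hB
    | mp _ _ ihBC ihB =>
      exact hΓ.mem_of_imp_mem (hΓ.mem_of_imp_mem (hΓ.mem_of_bProv (.kax i)) ihBC) ihB
  obtain ⟨Δ, hΔ, hsub, hAΔ⟩ := exists_isMaxConsistent_notMem (mt hbox hA)
  exact ⟨Δ, hΔ, fun _ hB => hsub hB, hAΔ⟩

theorem exists_canonRel_of_dia_mem (hΓ : IsMaxConsistent Ax Γ) {i : Fin 2}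
    (hA : BForm.dia i A ∈ Γ) : ∃ Δ, IsMaxConsistent Ax Δ ∧ CanonRel i Γ Δ ∧ A ∈ Δ := by
  obtain ⟨Δ, hΔ, hΓΔ, hnegA⟩ := hΓ.exists_canonRel_notMem (hΓ.neg_mem_iff.1 hA)
  exact ⟨Δ, hΔ, hΓΔ, not_not.1 (mt hΔ.neg_mem_iff.2 hnegA)⟩

end IsMaxConsistent

end MaxConsistent

/-- The conjunction of a list of formulas. -/
def conj : List BForm → BForm
  | [] => BForm.bot.neg
  | A :: l => (A.imp (conj l).neg).neg

theorem IsMaxConsistent.conj_mem_iff {Ax Γ : Set BForm} (hΓ : IsMaxConsistent Ax Γ)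
    (l : List BForm) : conj l ∈ Γ ↔ ∀ A ∈ l, A ∈ Γ := by
  induction l with
  | nil => simp only [conj, hΓ.neg_mem_iff, hΓ.bot_notMem, not_false_eq_true, List.not_mem_nil,
      IsEmpty.forall_iff, implies_true]
  | cons A l ih =>
    simp only [conj, hΓ.neg_mem_iff, hΓ.imp_mem_iff, ih, List.forall_mem_cons, Classical.not_imp,
      not_not]

/-! ### The canonical model of `LL` -/

/-- The axioms of `LL`, so that `A ∈ LL` unfolds to `BProv LLAx A`. -/
def LLAx : Set BForm := FusionAx ∪ {MKB}

theorem toB_mem_LLAx {A : MForm} (hA : A ∈ S4Ax) (i : Fin 2) : A.toB i ∈ LLAx :=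
  match i with
  | 0 => .inl (.inl ⟨A, .axm (.inl hA), rfl⟩)
  | 1 => .inl (.inr ⟨A, .axm hA, rfl⟩)

theorem bProv_LLAx_T (i : Fin 2) (A : BForm) : BProv LLAx ((BForm.box i A).imp A) := by
  have hT : (MForm.box pM).imp pM ∈ S4Ax := .inl rfl
  exact .subst (fun _ => A) (.axm (toB_mem_LLAx hT i))

theorem bProv_LLAx_four (i : Fin 2) (A : BForm) :
    BProv LLAx ((BForm.box i A).imp (BForm.box i (BForm.box i A))) := by
  have hfour : (MForm.box pM).imp (MForm.box (MForm.box pM)) ∈ S4Ax := .inr rfl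
  exact .subst (fun _ => A) (.axm (toB_mem_LLAx hfour i))

/-- The formula `◇₁A → □₁A`, saying that the truth value of `A` is settled along `□₁`. -/
def settled (A : BForm) : BForm := (BForm.dia 0 A).imp (BForm.box 0 A)

theorem bProv_LLAx_settled (A : BForm) : BProv LLAx (BForm.dia 0 (BForm.box 1 (settled A))) :=
  .subst (fun _ => A) (.axm (A := MKB) (.inr rfl))

section Canonical

variable {Γ Δ Θ : Set BForm} {A : BForm} {i : Fin 2}

namespace IsMaxConsistent

theorem mem_of_box_mem (hΓ : IsMaxConsistent LLAx Γ) (hA : BForm.box i A ∈ Γ) : A ∈ Γ :=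
  hΓ.mem_of_imp_mem (hΓ.mem_of_bProv (bProv_LLAx_T i A)) hA

theorem box_box_mem (hΓ : IsMaxConsistent LLAx Γ) (hA : BForm.box i A ∈ Γ) :
    BForm.box i (BForm.box i A) ∈ Γ :=
  hΓ.mem_of_imp_mem (hΓ.mem_of_bProv (bProv_LLAx_four i A)) hA

theorem dia_mem (hΓ : IsMaxConsistent LLAx Γ) (hA : A ∈ Γ) : BForm.dia i A ∈ Γ :=
  hΓ.neg_mem_iff.2 fun hbox => hΓ.neg_mem_iff.1 (hΓ.mem_of_box_mem hbox) hA

theorem canonRel_refl (hΓ : IsMaxConsistent LLAx Γ) : CanonRel i Γ Γ :=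
  fun _ => hΓ.mem_of_box_mem

theorem box_mem_of_canonRel (hΓ : IsMaxConsistent LLAx Γ) (hΓΔ : CanonRel i Γ Δ)
    (hA : BForm.box i A ∈ Γ) : BForm.box i A ∈ Δ :=
  hΓΔ _ (hΓ.box_box_mem hA)

theorem canonRel_trans (hΓ : IsMaxConsistent LLAx Γ) (hΓΔ : CanonRel i Γ Δ)
    (hΔΘ : CanonRel i Δ Θ) : CanonRel i Γ Θ :=
  fun _ hA => hΔΘ _ (hΓ.box_mem_of_canonRel hΓΔ hA)

theorem settled_mem_iff (hΓ : IsMaxConsistent LLAx Γ) :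
    settled A ∈ Γ ↔ BForm.box 0 A ∈ Γ ∨ BForm.box 0 A.neg ∈ Γ := by
  rw [settled, hΓ.imp_mem_iff, BForm.dia, hΓ.neg_mem_iff, or_comm, or_iff_not_imp_left]

theorem exists_canonRel_settled_mem (hΓ : IsMaxConsistent LLAx Γ) (l : List BForm) :
    ∃ Δ, IsMaxConsistent LLAx Δ ∧ CanonRel 0 Γ Δ ∧ ∀ A ∈ l, settled A ∈ Δ := by
  induction l with
  | nil => exact ⟨Γ, hΓ, hΓ.canonRel_refl, List.forall_mem_nil _⟩
  | cons A l ih =>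
    obtain ⟨Δ, hΔ, hΓΔ, hl⟩ := ih
    obtain ⟨Θ, hΘ, hΔΘ, hA⟩ :=
      hΔ.exists_canonRel_of_dia_mem (hΔ.mem_of_bProv (bProv_LLAx_settled A))
    have hpersist {B : BForm} (hB : settled B ∈ Δ) : settled B ∈ Θ :=
      hΘ.settled_mem_iff.2 <| (hΔ.settled_mem_iff.1 hB).imp
        (hΔ.box_mem_of_canonRel hΔΘ) (hΔ.box_mem_of_canonRel hΔΘ)
    exact ⟨Θ, hΘ, hΓ.canonRel_trans hΓΔ hΔΘ,
      List.forall_mem_cons.2 ⟨hΘ.mem_of_box_mem hA, fun B hB => hpersist (hl B hB)⟩⟩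

theorem exists_canonRel_box_conj_mem (hΓ : IsMaxConsistent LLAx Γ) (l : List BForm) :
    ∃ Δ, IsMaxConsistent LLAx Δ ∧ CanonRel 0 Γ Δ ∧
      BForm.box 1 (conj (l.map settled)) ∈ Δ := by
  set C := conj (l.map settled)
  -- The axiom is applied to `¬C`: were `C` false at some `Θ` accessible from `Δ` along `□₂`, then
  -- `¬C` would hold at all `□₁`-successors of `Θ`, although one of them satisfies `C`.
  obtain ⟨Δ, hΔ, hΓΔ, hsettled⟩ :=
    hΓ.exists_canonRel_of_dia_mem (hΓ.mem_of_bProv (bProv_LLAx_settled C.neg))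
  refine ⟨Δ, hΔ, hΓΔ, ?_⟩
  by_contra hbox
  obtain ⟨Θ, hΘ, hΔΘ, hC⟩ := hΔ.exists_canonRel_notMem hbox
  have hbox_neg : BForm.box 0 C.neg ∈ Θ :=
    hΘ.mem_of_imp_mem (hΔΘ _ hsettled) (hΘ.dia_mem (hΘ.neg_mem_iff.2 hC))
  obtain ⟨Ξ, hΞ, hΘΞ, hl⟩ := hΘ.exists_canonRel_settled_mem l
  exact hΞ.neg_mem_iff.1 (hΘΞ _ hbox_neg) ((hΞ.conj_mem_iff _).2 (List.forall_mem_map.2 hl))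

end IsMaxConsistent

end Canonical

/-! ### Decoding formulas -/

theorem unpair_snd_lt {n : ℕ} (hn : 0 < n.unpair.1) : n.unpair.2 < n :=
  calc n.unpair.2 ≤ Nat.pair 0 n.unpair.2 := Nat.right_le_pair 0 _
    _ < Nat.pair n.unpair.1 n.unpair.2 := Nat.pair_lt_pair_left _ hn
    _ = n := Nat.pair_unpair n

/-- The formula with code `c`. Numbers that are not codes are also assigned some formula, in such a
way that `impCode` and `boxCode` are always decoded to implications and boxes. -/
def decodeB (c : ℕ) : BForm :=
  if c.unpair.1 < 2 then
    if c.unpair.1 = 0 then .var c.unpair.2 else .bot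
  else if c.unpair.1 = 2 then
    (decodeB c.unpair.2.unpair.1).imp (decodeB c.unpair.2.unpair.2)
  else
    .box (Fin.ofNat 2 c.unpair.2.unpair.1) (decodeB c.unpair.2.unpair.2)
termination_by c
decreasing_by
  all_goals have hlt : c.unpair.2 < c := unpair_snd_lt (by omega)
  · exact (Nat.unpair_left_le _).trans_lt hlt
  · exact (Nat.unpair_right_le _).trans_lt hlt
  · exact (Nat.unpair_right_le _).trans_lt hlt

theorem decodeB_impCode (a b : ℕ) : decodeB (impCode a b) = (decodeB a).imp (decodeB b) := by
  rw [decodeB]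
  simp [impCode]

theorem decodeB_boxCode (i : Fin 2) (a : ℕ) : decodeB (boxCode i a) = .box i (decodeB a) := by
  rw [decodeB]
  simp [boxCode]

theorem decodeB_encodeB (A : BForm) : decodeB (encodeB A) = A := by
  induction A with
  | var n => rw [decodeB]; simp [encodeB]
  | bot => rw [decodeB]; simp [encodeB]
  | imp A B ihA ihB => exact (decodeB_impCode _ _).trans (by rw [ihA, ihB])
  | box i A ih => exact (decodeB_boxCode i _).trans (by rw [ih])

/-! ### The quasimodel of traces -/

open Classical in
/-- The type of the codes below `N` of the formulas of `Γ`. -/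
noncomputable def trace (N : ℕ) (Γ : Set BForm) : List ℕ :=
  (List.range N).filter (decodeB · ∈ Γ)

open Classical in
/-- The types which are the trace of some set in `𝒞`. -/
noncomputable def traces (N : ℕ) (𝒞 : Set (Set BForm)) : List (List ℕ) :=
  (List.sublists' (List.range N)).filter (· ∈ trace N '' 𝒞)

theorem mem_trace {N a : ℕ} {Γ : Set BForm} : a ∈ trace N Γ ↔ a < N ∧ decodeB a ∈ Γ := by
  simp only [trace, List.mem_filter, List.mem_range, decide_eq_true_eq]

theorem boxCode_mem_trace {N a : ℕ} {i : Fin 2} {Γ : Set BForm} :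
    boxCode i a ∈ trace N Γ ↔ boxCode i a < N ∧ .box i (decodeB a) ∈ Γ := by
  rw [mem_trace, decodeB_boxCode]

theorem mem_traces {N : ℕ} {𝒞 : Set (Set BForm)} {t : List ℕ} :
    t ∈ traces N 𝒞 ↔ ∃ Γ ∈ 𝒞, trace N Γ = t := by
  simp only [traces, List.mem_filter, decide_eq_true_eq, Set.mem_image, and_iff_right_iff_imp]
  rintro ⟨Γ, -, rfl⟩
  exact List.mem_sublists'.2 List.filter_sublist

theorem traces_mem_typeLists (N : ℕ) (𝒞 : Set (Set BForm)) : traces N 𝒞 ∈ typeLists N :=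
  List.mem_sublists'.2 List.filter_sublist

section Traces

variable {N : ℕ} {Γ Δ : Set BForm}

namespace IsMaxConsistent

theorem isSaturated_trace (hΓ : IsMaxConsistent LLAx Γ) : IsSaturated N (trace N Γ) where
  bot_notMem hbot := hΓ.bot_notMem (decodeB_encodeB .bot ▸ (mem_trace.1 hbot).2)
  impCode_mem_iff a ha b hb hab := by
    simp only [mem_trace, ha, hb, hab, true_and, decodeB_impCode, hΓ.imp_mem_iff]
  mem_of_boxCode_mem i a ha hbox :=
    mem_trace.2 ⟨ha, hΓ.mem_of_box_mem (boxCode_mem_trace.1 hbox).2⟩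

theorem accessible_trace (hΓ : IsMaxConsistent LLAx Γ) {i : Fin 2} (hΓΔ : CanonRel i Γ Δ) :
    Accessible N i (trace N Γ) (trace N Δ) := fun _ _ hbox =>
  boxCode_mem_trace.2 <| (boxCode_mem_trace.1 hbox).imp_right (hΓ.box_mem_of_canonRel hΓΔ)

theorem hasWitnesses_trace (hΓ : IsMaxConsistent LLAx Γ) {i : Fin 2} {𝒞 : Set (Set BForm)}
    (h𝒞 : ∀ Δ, IsMaxConsistent LLAx Δ → CanonRel i Γ Δ → Δ ∈ 𝒞) :
    HasWitnesses N i (traces N 𝒞) (trace N Γ) := by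
  intro a _ hlt hbox
  obtain ⟨Δ, hΔ, hΓΔ, haΔ⟩ :=
    hΓ.exists_canonRel_notMem fun h => hbox (boxCode_mem_trace.2 ⟨hlt, h⟩)
  exact ⟨trace N Δ, mem_traces.2 ⟨Δ, h𝒞 Δ hΔ hΓΔ, rfl⟩, hΓ.accessible_trace hΓΔ,
    fun ha => haΔ (mem_trace.1 ha).2⟩

end IsMaxConsistent

/-- The points of the canonical model of `LL`. -/
def canonPoints : Set (Set BForm) := {Γ | IsMaxConsistent LLAx Γ}

/-- The points of the canonical model of `LL` at which it is `□₂`-necessary that all formulas with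
code below `N` are settled. -/
def settledPoints (N : ℕ) : Set (Set BForm) :=
  {Γ ∈ canonPoints | BForm.box 1 (conj (((List.range N).map decodeB).map settled)) ∈ Γ}

theorem settled_mem_of_mem_settledPoints (hΓ : Γ ∈ settledPoints N) {a : ℕ} (ha : a < N) :
    settled (decodeB a) ∈ Γ :=
  (hΓ.1.conj_mem_iff _).1 (hΓ.1.mem_of_box_mem hΓ.2) _
    (List.mem_map_of_mem (List.mem_map_of_mem (List.mem_range.2 ha)))

theorem isQuasimodel_traces (N : ℕ) :
    IsQuasimodel N (traces N canonPoints) (traces N (settledPoints N)) where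
  subset u hu := by
    obtain ⟨Γ, hΓ, rfl⟩ := mem_traces.1 hu
    exact mem_traces.2 ⟨Γ, hΓ.1, rfl⟩
  isSaturated t ht := by
    obtain ⟨Γ, hΓ, rfl⟩ := mem_traces.1 ht
    exact hΓ.isSaturated_trace
  hasWitnesses i t ht := by
    obtain ⟨Γ, hΓ, rfl⟩ := mem_traces.1 ht
    exact hΓ.hasWitnesses_trace fun Δ hΔ _ => hΔ
  exists_accessible t ht := by
    obtain ⟨Γ, hΓ, rfl⟩ := mem_traces.1 ht
    obtain ⟨Δ, hΔ, hΓΔ, hbox⟩ := hΓ.exists_canonRel_box_conj_mem ((List.range N).map decodeB)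
    exact ⟨trace N Δ, mem_traces.2 ⟨Δ, ⟨hΔ, hbox⟩, rfl⟩, hΓ.accessible_trace hΓΔ⟩
  boxCode_mem u hu a ha hlt hau := by
    obtain ⟨Γ, hΓ, rfl⟩ := mem_traces.1 hu
    have hdia : BForm.dia 0 (decodeB a) ∈ Γ := hΓ.1.dia_mem (mem_trace.1 hau).2
    exact boxCode_mem_trace.2
      ⟨hlt, hΓ.1.mem_of_imp_mem (settled_mem_of_mem_settledPoints hΓ ha) hdia⟩
  hasWitnesses_one u hu := by
    obtain ⟨Γ, hΓ, rfl⟩ := mem_traces.1 hu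
    exact hΓ.1.hasWitnesses_trace fun Δ hΔ hΓΔ => ⟨hΔ, hΓ.1.box_mem_of_canonRel hΓΔ hΓ.2⟩

end Traces

theorem refutable_encodeB_iff (A : BForm) : Refutable (encodeB A) ↔ A ∉ LL := by
  constructor
  · rintro ⟨S, -, M, -, hSM, t, ht, hAt⟩
    exact hSM.notMem_LL ht (Nat.lt_succ_self _) hAt
  · intro hA
    obtain ⟨Γ, hΓ, hAΓ⟩ := exists_isMaxConsistent_of_not_bProv (Ax := LLAx) hA
    refine ⟨_, traces_mem_typeLists _ _, _, traces_mem_typeLists _ _, isQuasimodel_traces _,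
      trace _ Γ, mem_traces.2 ⟨Γ, hΓ, rfl⟩, fun h => hAΓ ?_⟩
    exact decodeB_encodeB A ▸ (mem_trace.1 h).2

/-- L = S4.1 ∗ S4 + ◇₁□₂(◇₁p → □₁p) is decidable: membership in L
is decidable by a computable function on (an effective encoding of) formulas. -/
theorem LL_decidable :
    Function.Injective encodeB ∧
    ∃ f : ℕ → Bool, Computable f ∧ ∀ A : BForm, (f (encodeB A) = true ↔ A ∈ LL) := by
  classical
  refine ⟨Function.LeftInverse.injective decodeB_encodeB, fun c => decide (¬ Refutable c),
    primrecPred_refutable.not.decide.to_comp, fun A => ?_⟩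
  rw [decide_eq_true_eq, refutable_encodeB_iff, not_not]
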